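/- arXiv:1607.07205 — 2 statements merged into one kernel-verified Lean document; each statement's English description precedes it below -/
import Mathlib

section
/- Let K be a field, n ≥ 1, X ∈ sl_n(K) an sl_n(K)-regular trace-zero matrix, and A ∈ sl_n(K) a trace-zero matrix. Then there exists a trace-zero matrix Y ∈ sl_n(K) with XY − YX = A if and only if tr(X^r · A) = 0 for all r = 1, …, n−1. -/
open Matrix

/-- The centralizer of a matrix `X` inside all `n × n` matrices, as a submodule. -/
def glCent {R : Type*} [CommRing R] {n : ℕ} (X : Matrix (Fin n) (Fin n) R) :
    Submodule R (Matrix (Fin n) (Fin n) R) where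
  carrier := {Y | X * Y = Y * X}
  add_mem' := fun {a b} ha hb => by
    simp only [Set.mem_setOf_eq] at *
    rw [Matrix.mul_add, Matrix.add_mul, ha, hb]
  zero_mem' := by simp
  smul_mem' := fun c a ha => by
    simp only [Set.mem_setOf_eq] at *
    rw [Matrix.mul_smul, Matrix.smul_mul, ha]

/-- The centralizer of a matrix `X` inside the trace-zero `n × n` matrices, as a submodule. -/
def slCent {R : Type*} [CommRing R] {n : ℕ} (X : Matrix (Fin n) (Fin n) R) :
    Submodule R (Matrix (Fin n) (Fin n) R) where
  carrier := {Y | Y.trace = 0 ∧ X * Y = Y * X}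
  add_mem' := fun {a b} ha hb =>
    ⟨by rw [trace_add, ha.1, hb.1, add_zero],
     by rw [Matrix.mul_add, Matrix.add_mul, ha.2, hb.2]⟩
  zero_mem' := ⟨by simp, by simp⟩
  smul_mem' := fun c a ha =>
    ⟨by rw [trace_smul, ha.1, smul_zero],
     by rw [Matrix.mul_smul, Matrix.smul_mul, ha.2]⟩

section Quotients

variable {R ι : Type*} [CommRing R] (I : ι → Ideal R)

/-- Every element of a product of cyclic modules is the image of `1` under an endomorphism. -/
theorem exists_linearMap_pi_quotient_apply_one (w : ∀ i, R ⧸ I i) :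
    ∃ g : (∀ i, R ⧸ I i) →ₗ[R] (∀ i, R ⧸ I i), g 1 = w :=
  ⟨LinearMap.mulLeft R w, by simp⟩

variable {I}

/-- If `1` separates the endomorphisms of `∏ i, R ⧸ I i`, then distinct comparable ideals of the
family are coprime. -/
theorem isCoprime_of_le_of_separating [DecidableEq ι]
    (hsep : ∀ g : (∀ i, R ⧸ I i) →ₗ[R] (∀ i, R ⧸ I i), g 1 = 0 → g = 0)
    {i j : ι} (hij : i ≠ j) (hle : I i ≤ I j) : IsCoprime (I i) (I j) := by
  let g : (∀ i, R ⧸ I i) →ₗ[R] (∀ i, R ⧸ I i) :=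
    LinearMap.single R (fun i => R ⧸ I i) j ∘ₗ
      (LinearMap.proj j - Submodule.factor hle ∘ₗ
        (LinearMap.proj i : (∀ i, R ⧸ I i) →ₗ[R] R ⧸ I i))
  have hg : g = 0 := by
    apply hsep
    have h1 : Submodule.factor hle (1 : R ⧸ I i) = (1 : R ⧸ I j) := rfl
    simp [g, h1]
  have h0 : g (Pi.single j 1) j = 0 := by simp [hg]
  have h1 : (1 : R ⧸ I j) = 0 := by
    simpa [g, Pi.single_eq_of_ne hij] using h0
  have htop : I j = ⊤ := by
    rw [Ideal.eq_top_iff_one, ← Ideal.Quotient.eq_zero_iff_mem]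
    exact h1
  rw [htop, Ideal.isCoprime_iff_sup_eq]
  simp

/-- If any two ideals of a finite family are coprime or comparable, and `1` separates the
endomorphisms of `∏ i, R ⧸ I i`, then `1` generates this module. -/
theorem exists_smul_one_eq_of_separating [Finite ι]
    (hI : ∀ i j, IsCoprime (I i) (I j) ∨ I i ≤ I j ∨ I j ≤ I i)
    (hsep : ∀ g : (∀ i, R ⧸ I i) →ₗ[R] (∀ i, R ⧸ I i), g 1 = 0 → g = 0)
    (w : ∀ i, R ⧸ I i) : ∃ r : R, r • (1 : ∀ i, R ⧸ I i) = w := by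
  classical
  have hco : Pairwise (Function.onFun IsCoprime I) := by
    intro i j hij
    rcases hI i j with h | h | h
    · exact h
    · exact isCoprime_of_le_of_separating hsep hij h
    · exact (isCoprime_of_le_of_separating hsep hij.symm h).symm
  obtain ⟨r, hr⟩ := Ideal.pi_quotient_surjective hco w
  refine ⟨r, funext fun i => ?_⟩
  rw [← hr i, Pi.smul_apply, Pi.one_apply, Algebra.smul_def, mul_one]
  rfl

end Quotients

/-- Ideals generated by powers of irreducible elements of a principal ideal domain are coprime or
comparable. -/
theorem isCoprime_or_le_span_irreducible_pow {R : Type*} [CommRing R] [IsDomain R]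
    [IsPrincipalIdealRing R] {p q : R} (hp : Irreducible p) (hq : Irreducible q) (a b : ℕ) :
    IsCoprime (Ideal.span {p ^ a}) (Ideal.span {q ^ b}) ∨
      Ideal.span {p ^ a} ≤ Ideal.span {q ^ b} ∨ Ideal.span {q ^ b} ≤ Ideal.span {p ^ a} := by
  by_cases h : p ∣ q
  · right
    have hpq : Associated p q := (hp.dvd_irreducible_iff_associated hq).1 h
    simp only [Ideal.span_singleton_le_span_singleton]
    rcases le_total a b with hab | hab
    · exact Or.inr ((pow_dvd_pow p hab).trans (hpq.pow_pow (n := b)).dvd)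
    · exact Or.inl ((pow_dvd_pow q hab).trans (hpq.pow_pow (n := a)).symm.dvd)
  · left
    rw [Ideal.isCoprime_span_singleton_iff]
    exact ((hp.coprime_iff_not_dvd).2 h).pow

/-- A finitely generated torsion module over a principal ideal domain has an element whose orbit
under the endomorphisms is everything, and which generates the module as soon as it separates the
endomorphisms. -/
theorem exists_generator_of_separating {R M : Type*} [CommRing R] [IsDomain R]
    [IsPrincipalIdealRing R] [AddCommGroup M] [Module R M] [Module.Finite R M]
    (hM : Module.IsTorsion R M) :
    ∃ v : M, (∀ w, ∃ g : M →ₗ[R] M, g v = w) ∧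
      ((∀ g : M →ₗ[R] M, g v = 0 → g = 0) → ∀ w, ∃ r : R, r • v = w) := by
  classical
  obtain ⟨ι, _, p, hp, e, ⟨φ⟩⟩ := Module.equiv_directSum_of_isTorsion hM
  let I : ι → Ideal R := fun i => Ideal.span {p i ^ e i}
  let ψ : M ≃ₗ[R] (∀ i, R ⧸ I i) :=
    φ.trans (DirectSum.linearEquivFunOnFintype R ι fun i => R ⧸ I i)
  refine ⟨ψ.symm 1, fun w => ?_, fun hsep w => ?_⟩
  · obtain ⟨g, hg⟩ := exists_linearMap_pi_quotient_apply_one I (ψ w)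
    exact ⟨ψ.symm.toLinearMap ∘ₗ g ∘ₗ ψ.toLinearMap, by simp [hg]⟩
  · obtain ⟨r, hr⟩ := exists_smul_one_eq_of_separating (I := I)
      (fun i j => isCoprime_or_le_span_irreducible_pow (hp i) (hp j) _ _)
      (fun g hg => by
        have h := hsep (ψ.symm.toLinearMap ∘ₗ g ∘ₗ ψ.toLinearMap) (by simp [hg])
        refine LinearMap.ext fun x => ?_
        simpa using LinearMap.congr_fun h (ψ.symm x)) (ψ w)
    exact ⟨r, by rw [← map_smul, hr, ψ.symm_apply_apply]⟩

/-- For an endomorphism `f` of a finite-dimensional space, some vector has full orbit under the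
commutant of `f`, and is cyclic for `f` as soon as it separates this commutant. -/
theorem Module.End.exists_cyclic_of_separating {K V : Type*} [Field K] [AddCommGroup V]
    [Module K V] [FiniteDimensional K V] (f : Module.End K V) :
    ∃ v : V, (∀ w, ∃ g : Module.End K V, Commute f g ∧ g v = w) ∧
      ((∀ g : Module.End K V, Commute f g → g v = 0 → g = 0) →
        ∀ w, ∃ p : Polynomial K, Polynomial.aeval f p v = w) := by
  let φ : V ≃ₗ[K] Module.AEval' f := Module.AEval'.of f
  obtain ⟨v, hv, hcyc⟩ := exists_generator_of_separating
    (Module.AEval.isTorsion_of_finiteDimensional K V f)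
  have toEnd (g : Module.AEval' f →ₗ[Polynomial K] Module.AEval' f) :
      ∃ g' : Module.End K V, Commute f g' ∧ ∀ x, g' x = φ.symm (g (φ x)) := by
    refine ⟨φ.symm.toLinearMap ∘ₗ g.restrictScalars K ∘ₗ φ.toLinearMap, ?_, fun x => rfl⟩
    ext x
    apply φ.injective
    simp [φ, ← Module.AEval'.X_smul_of]
  refine ⟨φ.symm v, fun w => ?_, fun hsep w => ?_⟩
  · obtain ⟨g, hg⟩ := hv (φ w)
    obtain ⟨g', hc, hg'⟩ := toEnd g
    exact ⟨g', hc, by simp [hg', hg]⟩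
  · obtain ⟨r, hr⟩ := hcyc (fun g hg => by
      obtain ⟨g', hc, hg'⟩ := toEnd g
      have h0 := hsep g' hc (by simp [hg', hg])
      ext1 x
      apply φ.symm.injective
      simpa [h0, eq_comm] using hg' (φ.symm x)) (φ w)
    refine ⟨r, ?_⟩
    have := congrArg φ.symm hr
    simpa [φ, Module.AEval'.of] using this

section Centralizer

variable {K : Type*} [Field K] {n : ℕ}

@[simp]
theorem mem_glCent {X Y : Matrix (Fin n) (Fin n) K} : Y ∈ glCent X ↔ X * Y = Y * X :=
  Iff.rfl

@[simp]
theorem mem_slCent {X Y : Matrix (Fin n) (Fin n) K} :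
    Y ∈ slCent X ↔ Y.trace = 0 ∧ X * Y = Y * X :=
  Iff.rfl

/-- The trace-zero centralizer has codimension at most one in the centralizer. -/
theorem finrank_glCent_le (X : Matrix (Fin n) (Fin n) K) :
    Module.finrank K (glCent X) ≤ Module.finrank K (slCent X) + 1 := by
  let t : glCent X →ₗ[K] K := Matrix.traceLinearMap (Fin n) K K ∘ₗ (glCent X).subtype
  have hker : (LinearMap.ker t).map (glCent X).subtype = slCent X := by
    ext Y
    simp [t, and_comm]
  have h1 := t.finrank_range_add_finrank_ker
  have h2 : Module.finrank K (LinearMap.range t) ≤ 1 := by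
    simpa using Submodule.finrank_le (LinearMap.range t)
  have h3 := Submodule.finrank_map_subtype_eq (glCent X) (LinearMap.ker t)
  rw [hker] at h3
  omega

/-- The centralizer of an `n × n` matrix has dimension at least `n`, and consists of polynomials
in the matrix in case of equality. -/
theorem le_finrank_glCent_and_exists_aeval_eq (X : Matrix (Fin n) (Fin n) K) :
    n ≤ Module.finrank K (glCent X) ∧
      (Module.finrank K (glCent X) = n →
        ∀ Z ∈ glCent X, ∃ p : Polynomial K, Polynomial.aeval X p = Z) := by
  obtain ⟨v, hv, hcyc⟩ := Module.End.exists_cyclic_of_separating (Matrix.toLinAlgEquiv' X)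
  let ev : glCent X →ₗ[K] (Fin n → K) :=
    (LinearMap.applyₗ v ∘ₗ (Matrix.toLin' : _ ≃ₗ[K] _).toLinearMap) ∘ₗ (glCent X).subtype
  have hev (Z : glCent X) : ev Z = Matrix.toLinAlgEquiv' (Z : Matrix (Fin n) (Fin n) K) v := rfl
  have hmem {g : Module.End K (Fin n → K)} (hg : Commute (Matrix.toLinAlgEquiv' X) g) :
      Matrix.toLinAlgEquiv'.symm g ∈ glCent X := by
    rw [mem_glCent]
    apply Matrix.toLinAlgEquiv'.injective
    simpa using hg.eq
  have hsurj : Function.Surjective ev := by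
    intro w
    obtain ⟨g, hg, rfl⟩ := hv w
    exact ⟨⟨_, hmem hg⟩, by rw [hev, AlgEquiv.apply_symm_apply]⟩
  have hle := LinearMap.finrank_le_finrank_of_surjective hsurj
  refine ⟨by simpa using hle, fun hn Z hZ => ?_⟩
  have hinj : Function.Injective ev :=
    (LinearMap.injective_iff_surjective_of_finrank_eq_finrank (by simpa using hn)).2 hsurj
  obtain ⟨p, hp⟩ := hcyc (fun g hg h0 => by
    have : (⟨_, hmem hg⟩ : glCent X) = 0 := hinj (by
      rw [hev, AlgEquiv.apply_symm_apply, h0, map_zero])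
    simpa using congrArg Subtype.val this) (Matrix.toLinAlgEquiv' Z v)
  refine ⟨p, ?_⟩
  have hpX : Polynomial.aeval X p ∈ glCent X := by
    rw [mem_glCent]
    simpa using congrArg (Polynomial.aeval X) (mul_comm Polynomial.X p)
  have : (⟨_, hpX⟩ : glCent X) = ⟨Z, hZ⟩ := hinj (by
    rw [hev, hev, ← hp, Polynomial.aeval_algHom_apply])
  exact congrArg Subtype.val this

/-- If `tr(X ^ r * A)` vanishes for all `r < n`, then `tr(p(X) * A)` vanishes for all polynomials
`p`. -/
theorem trace_aeval_mul_eq_zero {X A : Matrix (Fin n) (Fin n) K}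
    (h : ∀ r < n, (X ^ r * A).trace = 0) (p : Polynomial K) :
    (Polynomial.aeval X p * A).trace = 0 := by
  rw [← Polynomial.aeval_modByMonic_eq_self_of_root X.aeval_self_charpoly,
    Polynomial.aeval_eq_sum_range, Finset.sum_mul, Matrix.trace_sum]
  refine Finset.sum_eq_zero fun r hr => ?_
  rw [Matrix.smul_mul, Matrix.trace_smul]
  by_cases hrn : r < n
  · rw [h r hrn, smul_zero]
  · rw [Polynomial.coeff_eq_zero_of_degree_lt, zero_smul]
    refine (Polynomial.degree_modByMonic_lt _ X.charpoly_monic).trans_le ?_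
    rw [Matrix.charpoly_degree_eq_dim, Fintype.card_fin]
    exact_mod_cast not_lt.1 hrn

/-- Every linear functional on matrices is of the form `Y ↦ tr(Z * Y)`. -/
theorem exists_eq_trace_mul (φ : Matrix (Fin n) (Fin n) K →ₗ[K] K) :
    ∃ Z : Matrix (Fin n) (Fin n) K, ∀ Y, φ Y = (Z * Y).trace := by
  refine ⟨Matrix.of fun j i => φ (Matrix.single i j 1), fun Y => ?_⟩
  have : φ = Matrix.traceLinearMap (Fin n) K K ∘ₗ
      LinearMap.mulLeft K (Matrix.of fun j i => φ (Matrix.single i j 1)) := by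
    refine Matrix.ext_linearMap K fun i j => LinearMap.ext_ring ?_
    simp [Matrix.trace_mul_single]
  exact LinearMap.congr_fun this Y

/-- A matrix which is trace-orthogonal to the centralizer of `X` is a commutator with `X`. -/
theorem exists_commutator_eq_of_trace_mul_eq_zero {X A : Matrix (Fin n) (Fin n) K}
    (h : ∀ Z ∈ glCent X, (Z * A).trace = 0) :
    ∃ Y, X * Y - Y * X = A := by
  by_contra hA
  let ad : Matrix (Fin n) (Fin n) K →ₗ[K] Matrix (Fin n) (Fin n) K :=
    LinearMap.mulLeft K X - LinearMap.mulRight K X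
  have hA' : A ∉ LinearMap.range ad := hA
  obtain ⟨φ, hφA, hφ⟩ := Submodule.exists_le_ker_of_notMem hA'
  obtain ⟨Z, hZ⟩ := exists_eq_trace_mul φ
  refine hφA ?_
  rw [hZ]
  refine h Z (Matrix.ext_iff_trace_mul_right.2 fun Y => ?_)
  have hY : (Z * (X * Y - Y * X)).trace = 0 := by
    rw [← hZ]
    exact hφ ⟨Y, rfl⟩
  rw [Matrix.mul_sub, Matrix.trace_sub, sub_eq_zero, ← Matrix.mul_assoc, ← Matrix.mul_assoc,
    Matrix.trace_mul_comm (Z * Y), ← Matrix.mul_assoc] at hY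
  exact hY.symm

end Centralizer

/-- Laffey–Reams criterion over a field: for an `sl_n(K)`-regular trace-zero `X` and a
trace-zero `A`, `A = [X, Y]` for some trace-zero `Y` iff `tr(X^r A) = 0` for `r = 1, …, n-1`. -/
theorem commutator_criterion_field {K : Type*} [Field K] {n : ℕ} (hn : 1 ≤ n)
    (X : Matrix (Fin n) (Fin n) K) (hX : X.trace = 0)
    (hreg : Module.finrank K (slCent X) = n - 1)
    (A : Matrix (Fin n) (Fin n) K) (hA : A.trace = 0) :
    (∃ Y : Matrix (Fin n) (Fin n) K, Y.trace = 0 ∧ X * Y - Y * X = A) ↔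
      ∀ r : ℕ, 1 ≤ r → r ≤ n - 1 → (X ^ r * A).trace = 0 := by
  constructor
  · rintro ⟨Y, -, rfl⟩ r - -
    rw [Matrix.mul_sub, Matrix.trace_sub, ← Matrix.mul_assoc, ← Matrix.mul_assoc,
      Matrix.trace_mul_comm (X ^ r * Y), ← Matrix.mul_assoc, ← pow_succ, ← pow_succ', sub_self]
  · intro h
    obtain ⟨hle, hpoly⟩ := le_finrank_glCent_and_exists_aeval_eq X
    have hge := finrank_glCent_le X
    have htr : ∀ r < n, (X ^ r * A).trace = 0 := by
      intro r hr
      rcases Nat.eq_zero_or_pos r with rfl | hr0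
      · simpa using hA
      · exact h r hr0 (by omega)
    obtain ⟨Y, hY⟩ := exists_commutator_eq_of_trace_mul_eq_zero (X := X) (A := A) (by
      intro Z hZ
      obtain ⟨p, rfl⟩ := hpoly (by omega) Z hZ
      exact trace_aeval_mul_eq_zero htr p)
    obtain ⟨Z, hZ, hZ0⟩ : ∃ Z ∈ glCent X, Z.trace ≠ 0 := by
      by_contra! hall
      have : glCent X = slCent X := by
        ext Z
        exact ⟨fun hZ => ⟨hall Z hZ, hZ⟩, fun hZ => hZ.2⟩
      rw [this] at hle
      omega
    refine ⟨Y - (Y.trace / Z.trace) • Z, by simp [hZ0], ?_⟩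
    rw [Matrix.mul_sub, Matrix.sub_mul, Matrix.mul_smul, Matrix.smul_mul, mem_glCent.1 hZ,
      sub_sub_sub_cancel_right, hY]
end

section
/- Let S be a commutative local ring with maximal ideal m, and let X ∈ sl_n(S) be a trace-zero matrix such that the reduction X mod m is sl_n(S/m)-regular. Then the canonical reduction map from {Y ∈ M_n(S) : tr(Y) = 0 and XY = YX} to {Z ∈ M_n(S/m) : tr(Z) = 0 and (X mod m)Z = Z(X mod m)} is surjective. -/
open Matrix

/-- A finitely generated torsion module over a PID has an element whose orbit under the
endomorphism ring is the whole module. -/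
theorem Module.IsTorsion.exists_forall_exists_end_apply_eq {R M : Type*} [CommRing R] [IsDomain R]
    [IsPrincipalIdealRing R] [AddCommGroup M] [Module R M] [Module.Finite R M]
    (hM : Module.IsTorsion R M) :
    ∃ v : M, ∀ w : M, ∃ c : Module.End R M, c v = w := by
  classical
  obtain ⟨ι, _, p, -, k, ⟨e⟩⟩ := Module.equiv_directSum_of_isTorsion hM
  refine ⟨e.symm (DFinsupp.equivFunOnFintype.symm fun _ ↦ Submodule.mkQ _ 1), fun w ↦ ?_⟩
  have key (i : ι) (y : R ⧸ (Submodule.span R {p i ^ k i})) :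
      ∃ f : (R ⧸ (Submodule.span R {p i ^ k i})) →ₗ[R] (R ⧸ (Submodule.span R {p i ^ k i})),
        f (Submodule.mkQ _ 1) = y := by
    refine ⟨Submodule.liftQ _ (LinearMap.toSpanSingleton R _ y) fun r hr ↦ ?_,
      (Submodule.liftQ_apply _ _ _).trans (one_smul R y)⟩
    obtain ⟨z, rfl⟩ := Submodule.mkQ_surjective _ y
    rw [LinearMap.mem_ker, LinearMap.toSpanSingleton_apply, ← map_smul, Submodule.mkQ_apply,
      Submodule.Quotient.mk_eq_zero, smul_eq_mul, mul_comm]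
    exact Submodule.smul_mem _ z hr
  choose f hf using fun i ↦ key i ((e w : DirectSum _ _) i)
  refine ⟨e.symm.toLinearMap ∘ₗ DFinsupp.mapRange.linearMap f ∘ₗ e.toLinearMap, ?_⟩
  simp only [LinearMap.comp_apply, LinearEquiv.coe_coe, LinearEquiv.apply_symm_apply]
  rw [LinearEquiv.symm_apply_eq]
  refine DFinsupp.ext fun i ↦ ?_
  rw [DFinsupp.mapRange.linearMap_apply, DFinsupp.mapRange_apply]
  exact hf i

/-- An element of a finitely generated torsion module over a PID that is killed by no nonzero
endomorphism generates the module. -/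
theorem Module.IsTorsion.span_singleton_eq_top {R M : Type*} [CommRing R] [IsDomain R]
    [IsPrincipalIdealRing R] [AddCommGroup M] [Module R M] [Module.Finite R M]
    (hM : Module.IsTorsion R M) {v : M} (hv : ∀ c : Module.End R M, c v = 0 → c = 0) :
    Submodule.span R {v} = ⊤ := by
  by_contra hne
  obtain ⟨N, hN, hvN⟩ := (eq_top_or_exists_le_coatom (Submodule.span R {v})).resolve_left hne
  have := isSimpleModule_iff_isCoatom.mpr hN
  obtain ⟨I, hI, ⟨e⟩⟩ := isSimpleModule_iff_quot_maximal.mp this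
  obtain ⟨a, haM, ha0⟩ := Submodule.annihilator_top_inter_nonZeroDivisors hM
  rw [SetLike.mem_coe, Submodule.annihilator_top] at haM
  obtain ⟨μ, hμ⟩ := (IsPrincipalIdealRing.principal (Module.annihilator R M)).principal
  obtain ⟨π, rfl⟩ := (IsPrincipalIdealRing.principal I).principal
  have hμ0 : μ ≠ 0 := by
    rintro rfl
    rw [hμ] at haM
    exact nonZeroDivisors.ne_zero ha0 (by simpa using haM)
  have hμmem : μ ∈ Module.annihilator R M := hμ ▸ Submodule.mem_span_singleton_self μ
  have hμπ : μ ∈ Submodule.span R {π} := by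
    obtain ⟨x, hx⟩ := e.surjective (Submodule.mkQ _ 1)
    obtain ⟨y, rfl⟩ := Submodule.mkQ_surjective _ x
    have : μ • e (N.mkQ y) = 0 := by
      rw [← map_smul, ← map_smul, Module.mem_annihilator.mp hμmem, map_zero, map_zero]
    rw [hx, ← map_smul, Submodule.mkQ_apply, Submodule.Quotient.mk_eq_zero] at this
    simpa using this
  obtain ⟨g, hg⟩ := Submodule.mem_span_singleton.mp hμπ
  rw [smul_eq_mul] at hg
  have hgM : g ∉ Module.annihilator R M := by
    intro h
    rw [hμ] at h
    obtain ⟨b, hb⟩ := Submodule.mem_span_singleton.mp h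
    rw [smul_eq_mul] at hb
    refine hI.ne_top ((Ideal.eq_top_iff_one _).mpr (Submodule.mem_span_singleton.mpr ⟨b, ?_⟩))
    apply mul_right_cancel₀ hμ0
    rw [smul_eq_mul]
    linear_combination π * hb + hg
  obtain ⟨w, hw⟩ : ∃ w : M, g • w ≠ 0 := by
    by_contra! h
    exact hgM (Module.mem_annihilator.mpr h)
  let f : (R ⧸ Submodule.span R {π}) →ₗ[R] M :=
    Submodule.liftQ _ (LinearMap.toSpanSingleton R M (g • w)) <| by
      rw [Submodule.span_singleton_le_iff_mem, LinearMap.mem_ker, LinearMap.toSpanSingleton_apply,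
        smul_smul, mul_comm, hg]
      exact Module.mem_annihilator.mp hμmem w
  have hc := hv (f ∘ₗ e.toLinearMap ∘ₗ N.mkQ) <| by
    have : N.mkQ v = 0 := by
      simpa using hvN (Submodule.mem_span_singleton_self v)
    simp only [LinearMap.comp_apply, this, map_zero]
  obtain ⟨x, hx⟩ := e.surjective (Submodule.mkQ _ 1)
  obtain ⟨y, rfl⟩ := Submodule.mkQ_surjective _ x
  have := LinearMap.congr_fun hc y
  simp only [LinearMap.comp_apply, LinearEquiv.coe_coe, hx] at this
  exact hw ((one_smul R (g • w)).symm.trans this)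

theorem aeval_mem_glCent {R : Type*} [CommRing R] {n : ℕ} (X : Matrix (Fin n) (Fin n) R)
    (p : Polynomial R) : Polynomial.aeval X p ∈ glCent X := by
  change X * _ = _ * X
  simpa using congrArg (Polynomial.aeval X) (mul_comm Polynomial.X p)

section Field

variable {K : Type*} [Field K] {n : ℕ} (A : Matrix (Fin n) (Fin n) K)

/-- Evaluation of the centralizer of a matrix at a vector. -/
def glCentMulVec (v : Fin n → K) : glCent A →ₗ[K] (Fin n → K) :=
  (Matrix.mulVecBilin K K).flip v ∘ₗ (glCent A).subtype

@[simp]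
theorem glCentMulVec_apply (v : Fin n → K) (Z : glCent A) :
    glCentMulVec A v Z = (Z : Matrix (Fin n) (Fin n) K) *ᵥ v := rfl

/-- The matrix of an endomorphism of the `K[X]`-module attached to `A` centralizes `A`. -/
theorem exists_glCent_mulVec_eq
    (c : Module.End (Polynomial K) (Module.AEval' (Matrix.toLin' A))) :
    ∃ Z ∈ glCent A, ∀ u, Module.AEval'.of (Matrix.toLin' A) (Z *ᵥ u) =
      c (Module.AEval'.of (Matrix.toLin' A) u) := by
  let o := Module.AEval'.of (Matrix.toLin' A)
  let f : (Fin n → K) →ₗ[K] (Fin n → K) :=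
    o.symm.toLinearMap ∘ₗ c.restrictScalars K ∘ₗ o.toLinearMap
  have hf (u : Fin n → K) : LinearMap.toMatrix' f *ᵥ u = o.symm (c (o u)) := by
    rw [LinearMap.toMatrix'_mulVec]; rfl
  refine ⟨LinearMap.toMatrix' f, ?_, fun u ↦ by rw [hf]; exact o.apply_symm_apply _⟩
  change A * _ = _ * A
  refine Matrix.ext_of_mulVec_single fun i ↦ ?_
  rw [← Matrix.mulVec_mulVec, ← Matrix.mulVec_mulVec, hf, hf, ← Matrix.toLin'_apply A,
    ← Matrix.toLin'_apply A, ← Module.AEval'.X_smul_of, map_smul, Module.AEval'.of_symm_X_smul]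

theorem exists_surjective_glCentMulVec : ∃ v, Function.Surjective (glCentMulVec A v) := by
  obtain ⟨v, hv⟩ := Module.IsTorsion.exists_forall_exists_end_apply_eq
    (Module.AEval.isTorsion_of_finiteDimensional K (Fin n → K) (Matrix.toLin' A))
  refine ⟨(Module.AEval'.of (Matrix.toLin' A)).symm v, fun w ↦ ?_⟩
  obtain ⟨c, hc⟩ := hv (Module.AEval'.of (Matrix.toLin' A) w)
  obtain ⟨Z, hZ, hZc⟩ := exists_glCent_mulVec_eq A c
  refine ⟨⟨Z, hZ⟩, (Module.AEval'.of (Matrix.toLin' A)).injective ?_⟩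
  rw [glCentMulVec_apply, hZc, LinearEquiv.apply_symm_apply, hc]

theorem le_finrank_glCent : n ≤ Module.finrank K (glCent A) := by
  obtain ⟨v, hv⟩ := exists_surjective_glCentMulVec A
  simpa using LinearMap.finrank_le_finrank_of_surjective hv

theorem toLin'_aeval (p : Polynomial K) :
    Polynomial.aeval (Matrix.toLin' A) p = Matrix.toLin' (Polynomial.aeval A p) :=
  Polynomial.aeval_algHom_apply (Matrix.toLinAlgEquiv' : _ ≃ₐ[K] _).toAlgHom A p

/-- If the centralizer of a matrix has the minimal dimension `n`, it consists of polynomials in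
that matrix. -/
theorem exists_aeval_eq_of_mem_glCent (h : Module.finrank K (glCent A) = n)
    {Z : Matrix (Fin n) (Fin n) K} (hZ : Z ∈ glCent A) :
    ∃ p : Polynomial K, Polynomial.aeval A p = Z := by
  obtain ⟨v, hv⟩ := exists_surjective_glCentMulVec A
  have hinj : Function.Injective (glCentMulVec A v) :=
    (LinearMap.injective_iff_surjective_of_finrank_eq_finrank (by simpa using h)).mpr hv
  have htop := (Module.AEval.isTorsion_of_finiteDimensional K (Fin n → K)
    (Matrix.toLin' A)).span_singleton_eq_top (v := Module.AEval'.of (Matrix.toLin' A) v)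
      fun c hc ↦ by
    obtain ⟨W, hW, hWc⟩ := exists_glCent_mulVec_eq A c
    have hW0 : (⟨W, hW⟩ : glCent A) = 0 := hinj <| by
      rw [map_zero, glCentMulVec_apply]
      exact (Module.AEval'.of (Matrix.toLin' A)).injective (by rw [hWc, hc, map_zero])
    obtain rfl : W = 0 := congrArg Subtype.val hW0
    refine LinearMap.ext fun u ↦ ?_
    obtain ⟨u, rfl⟩ := (Module.AEval'.of (Matrix.toLin' A)).surjective u
    rw [← hWc, Matrix.zero_mulVec, map_zero, LinearMap.zero_apply]
  obtain ⟨p, hp⟩ := Submodule.mem_span_singleton.mp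
    (htop ▸ Submodule.mem_top : Module.AEval'.of (Matrix.toLin' A) (Z *ᵥ v) ∈ _)
  have hp' : Polynomial.aeval A p *ᵥ v = Z *ᵥ v := by
    rw [← Module.AEval.of_aeval_smul, toLin'_aeval] at hp
    exact (Module.AEval'.of (Matrix.toLin' A)).injective hp
  exact ⟨p, congrArg Subtype.val
    (hinj (a₁ := ⟨_, aeval_mem_glCent A p⟩) (a₂ := ⟨Z, hZ⟩) hp')⟩

/-- The trace on the centralizer of a matrix. -/
def glCentTrace : glCent A →ₗ[K] K := Matrix.traceLinearMap (Fin n) K K ∘ₗ (glCent A).subtype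

theorem finrank_ker_glCentTrace :
    Module.finrank K (LinearMap.ker (glCentTrace A)) = Module.finrank K (slCent A) := by
  have h : (LinearMap.ker (glCentTrace A)).map (glCent A).subtype = slCent A := by
    ext Z
    simp only [Submodule.mem_map, LinearMap.mem_ker, Submodule.subtype_apply]
    exact ⟨fun ⟨⟨W, hW⟩, ht, hWZ⟩ ↦ hWZ ▸ ⟨ht, hW⟩, fun hZ ↦ ⟨⟨Z, hZ.2⟩, hZ.1, rfl⟩⟩
  rw [← h]
  exact (Submodule.equivSubtypeMap (glCent A) _).finrank_eq

/-- A matrix regular in `sl_n` with `n` positive is regular in `gl_n`, and the trace does not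
vanish on its centralizer. -/
theorem finrank_glCent_eq_and_exists_trace_ne_zero (hn : 0 < n)
    (h : Module.finrank K (slCent A) = n - 1) :
    Module.finrank K (glCent A) = n ∧ ∃ Z ∈ glCent A, Z.trace ≠ 0 := by
  have hle := le_finrank_glCent A
  have hsum := (glCentTrace A).finrank_range_add_finrank_ker
  rw [finrank_ker_glCentTrace, h] at hsum
  have hrange : Module.finrank K (LinearMap.range (glCentTrace A)) ≤ 1 := by
    simpa using Submodule.finrank_le (LinearMap.range (glCentTrace A))
  refine ⟨by omega, ?_⟩
  by_contra! h0
  have : glCentTrace A = 0 := LinearMap.ext fun Z ↦ h0 Z Z.2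
  rw [this, LinearMap.range_zero, finrank_bot] at hsum
  omega

end Field

/-- Polynomials in the image of `X` under a surjective ring homomorphism lift to the centralizer
of `X`. -/
theorem exists_glCent_map_eq_aeval {S k : Type*} [CommRing S] [CommRing k] {f : S →+* k}
    (hf : Function.Surjective f) {n : ℕ} (X : Matrix (Fin n) (Fin n) S) (p : Polynomial k) :
    ∃ Y ∈ glCent X, Y.map f = Polynomial.aeval (X.map f) p := by
  obtain ⟨q, rfl⟩ := Polynomial.map_surjective f hf p
  refine ⟨Polynomial.aeval X q, aeval_mem_glCent X q, ?_⟩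
  rw [Polynomial.aeval_def, Polynomial.aeval_def, Polynomial.eval₂_map]
  change f.mapMatrix _ = _
  rw [Polynomial.hom_eval₂]
  congr 1
  ext s i j
  simp [Matrix.algebraMap_matrix_apply, apply_ite f]

/-- Over a commutative local ring `S`, if `X mod m` is `sl_n(S/m)`-regular, then the
reduction map between trace-zero centralizers is surjective. -/
theorem slCent_reduction_surjective {S : Type*} [CommRing S] [IsLocalRing S] {n : ℕ}
    (X : Matrix (Fin n) (Fin n) S) (hX : X.trace = 0)
    (hreg : Module.finrank (IsLocalRing.ResidueField S)
      (slCent (X.map (IsLocalRing.residue S))) = n - 1) :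
    ∀ Z ∈ slCent (X.map (IsLocalRing.residue S)),
      ∃ Y ∈ slCent X, Y.map (IsLocalRing.residue S) = Z := by
  intro Z hZ
  obtain rfl | hn := n.eq_zero_or_pos
  · exact ⟨0, zero_mem _, Subsingleton.elim _ _⟩
  obtain ⟨hgl, T, hT, hT0⟩ := finrank_glCent_eq_and_exists_trace_ne_zero _ hn hreg
  have lift {W} (hW : W ∈ glCent (X.map (IsLocalRing.residue S))) :
      ∃ Y ∈ glCent X, Y.map (IsLocalRing.residue S) = W := by
    obtain ⟨p, rfl⟩ := exists_aeval_eq_of_mem_glCent _ hgl hW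
    exact exists_glCent_map_eq_aeval IsLocalRing.residue_surjective X p
  obtain ⟨Y, hY, rfl⟩ := lift hZ.2
  obtain ⟨U, hU, rfl⟩ := lift hT
  have trace_map (W : Matrix (Fin n) (Fin n) S) :
      (W.map (IsLocalRing.residue S)).trace = IsLocalRing.residue S W.trace :=
    (AddMonoidHom.map_trace (IsLocalRing.residue S) W).symm
  rw [trace_map] at hT0
  obtain ⟨u, hu⟩ := (IsLocalRing.residue_ne_zero_iff_isUnit _).mp hT0
  have hY0 : IsLocalRing.residue S Y.trace = 0 := trace_map Y ▸ hZ.1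
  refine ⟨Y - (Y.trace * ↑u⁻¹) • U, ⟨?_, sub_mem hY (Submodule.smul_mem _ _ hU)⟩, ?_⟩
  · rw [Matrix.trace_sub, Matrix.trace_smul, ← hu, smul_eq_mul, mul_assoc, Units.inv_mul, mul_one,
      sub_self]
  · ext i j
    simp [hY0]
end
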